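/- Let L ≥ 0. Then ∫_{−∞}^∞ 2·log((cosh x + cosh(L/2)) / (cosh x − 1)) dx = 2π² + L²/2. -/

import Mathlib

open Real

open MeasureTheory Set

/-!
The integrand is even. For `x > 0`, pulling `exp x / 2` out of numerator and denominator gives
`(cosh x + cosh a) / (cosh x - 1) = (1 + e^{-(x+a)}) (1 + e^{-(x-a)}) / (1 - e^{-x})²`.
Expanding the logarithm in powers of `e^{-x}` gives `∫₀^∞ log (1 - e^{-x}) = -ζ(2)`, and
`1 - e^{-2x} = (1 - e^{-x}) (1 + e^{-x})` then gives `∫₀^∞ log (1 + e^{-x}) = ζ(2) / 2`.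
The two shifted factors contribute the tails of `log (1 + e^{-x})` beyond `a` and `-a`; compared
with twice the tail beyond `0` their sum gains `∫₀^a x dx`, since
`log (1 + e^x) - log (1 + e^{-x}) = x`. Altogether, with `a = L / 2`, the integral of the logarithm
over the line is `2 (2 · π² / 12 + a² / 2 + 2 · π² / 6) = π² + a²`.
-/

section Translation

variable {E : Type*} [NormedAddCommGroup E]

lemma integral_Ioi_comp_add_right [NormedSpace ℝ E] (f : ℝ → E) (a c : ℝ) :
    ∫ x in Ioi a, f (x + c) = ∫ x in Ioi (a + c), f x := by
  simpa using (measurePreserving_add_right volume c).setIntegral_preimage_emb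
    (measurableEmbedding_addRight c) f (Ioi (a + c))

lemma integrableOn_Ioi_comp_add_right_iff (f : ℝ → E) (a c : ℝ) :
    IntegrableOn (fun x => f (x + c)) (Ioi a) ↔ IntegrableOn f (Ioi (a + c)) := by
  simpa using! (measurePreserving_add_right volume c).integrableOn_comp_preimage
    (measurableEmbedding_addRight c) (f := f) (s := Ioi (a + c))

end Translation

section LogOneSubExp

lemma one_sub_exp_neg_ne_zero {x : ℝ} (hx : x ≠ 0) : 1 - exp (-x) ≠ 0 := by
  rwa [sub_ne_zero, ne_comm, Ne, exp_eq_one_iff, neg_eq_zero]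

lemma hasSum_one_div_nat_add_one_sq : HasSum (fun n : ℕ => 1 / ((n : ℝ) + 1) ^ 2) (π ^ 2 / 6) := by
  simpa using (hasSum_nat_add_iff' 1).2 hasSum_zeta_two

lemma hasSum_exp_neg_mul_div_log {x : ℝ} (hx : 0 < x) :
    HasSum (fun n : ℕ => exp (-(n + 1) * x) / (n + 1)) (-log (1 - exp (-x))) := by
  have habs : |exp (-x)| < 1 := by rwa [abs_exp, exp_lt_one_iff, neg_lt_zero]
  convert! hasSum_pow_div_log_of_abs_lt_one habs using 3 with n
  rw [← exp_nat_mul]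
  push_cast
  ring_nf

lemma integral_exp_neg_mul_div_Ioi_zero {c : ℝ} (hc : 0 < c) :
    ∫ x in Ioi (0 : ℝ), exp (-c * x) / c = 1 / c ^ 2 := by
  rw [integral_div, integral_exp_mul_Ioi (neg_lt_zero.2 hc), mul_zero, exp_zero, neg_div_neg_eq,
    div_div, sq]

lemma integral_log_one_sub_exp_neg :
    ∫ x in Ioi (0 : ℝ), log (1 - exp (-x)) = -(π ^ 2 / 6) := by
  have hterm (n : ℕ) : ∫ x in Ioi (0 : ℝ), exp (-((n : ℝ) + 1) * x) / (n + 1) = 1 / (n + 1) ^ 2 :=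
    integral_exp_neg_mul_div_Ioi_zero n.cast_add_one_pos
  have hterm_integrable (n : ℕ) :
      IntegrableOn (fun x : ℝ => exp (-((n : ℝ) + 1) * x) / (n + 1)) (Ioi 0) :=
    (integrableOn_exp_mul_Ioi (neg_lt_zero.2 n.cast_add_one_pos) 0).div_const _
  have hnorm_summable :
      Summable fun n : ℕ => ∫ x in Ioi (0 : ℝ), ‖exp (-((n : ℝ) + 1) * x) / (n + 1)‖ := by
    refine hasSum_one_div_nat_add_one_sq.summable.congr fun n => ?_
    rw [← hterm n]
    congr 1 with x
    rw [norm_of_nonneg (by positivity)]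
  have hsum := hasSum_integral_of_summable_integral_norm hterm_integrable hnorm_summable
  simp only [hterm] at hsum
  rw [hasSum_one_div_nat_add_one_sq.unique hsum, ← integral_neg]
  refine setIntegral_congr_fun measurableSet_Ioi fun x hx => ?_
  rw [(hasSum_exp_neg_mul_div_log hx).tsum_eq, neg_neg]

lemma integral_log_one_sub_exp_neg_mul {c : ℝ} (hc : 0 < c) :
    ∫ x in Ioi (0 : ℝ), log (1 - exp (-(c * x))) = -(π ^ 2 / (6 * c)) := by
  rw [integral_comp_mul_left_Ioi (fun x => log (1 - exp (-x))) 0 hc, mul_zero,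
    integral_log_one_sub_exp_neg, smul_eq_mul]
  field_simp

lemma integrableOn_log_one_sub_exp_neg_mul {c : ℝ} (hc : 0 < c) :
    IntegrableOn (fun x => log (1 - exp (-(c * x)))) (Ioi 0) := by
  refine .of_integral_ne_zero ?_
  rw [integral_log_one_sub_exp_neg_mul hc]
  exact neg_ne_zero.2 (by positivity)

lemma integrableOn_log_one_sub_exp_neg : IntegrableOn (fun x => log (1 - exp (-x))) (Ioi 0) := by
  simpa only [one_mul] using integrableOn_log_one_sub_exp_neg_mul one_pos

end LogOneSubExp

section LogOneAddExp

lemma log_one_add_exp_neg {x : ℝ} (hx : x ≠ 0) :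
    log (1 + exp (-x)) = log (1 - exp (-(2 * x))) - log (1 - exp (-x)) := by
  have hfactor : 1 - exp (-(2 * x)) = (1 - exp (-x)) * (1 + exp (-x)) := by
    rw [two_mul, neg_add, exp_add]
    ring
  rw [hfactor, log_mul (one_sub_exp_neg_ne_zero hx) (by positivity), add_sub_cancel_left]

lemma log_one_add_exp_sub_log_one_add_exp_neg (x : ℝ) :
    log (1 + exp x) - log (1 + exp (-x)) = x := by
  have hfactor : 1 + exp x = exp x * (1 + exp (-x)) := by
    rw [mul_add, ← exp_add, add_neg_cancel, exp_zero, mul_one, add_comm]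
  rw [hfactor, log_mul (exp_ne_zero x) (by positivity), log_exp, add_sub_cancel_right]

lemma continuous_log_one_add_exp_neg : Continuous fun x => log (1 + exp (-x)) :=
  Continuous.log (by fun_prop) fun x => by positivity

lemma integrableOn_log_one_add_exp_neg (a : ℝ) :
    IntegrableOn (fun x => log (1 + exp (-x))) (Ioi a) := by
  refine (integrableOn_exp_neg_Ioi a).mono'
    continuous_log_one_add_exp_neg.aestronglyMeasurable (.of_forall fun x => ?_)
  have hexp : 0 < exp (-x) := exp_pos _
  rw [norm_of_nonneg (log_nonneg (by linarith))]
  linarith [log_le_sub_one_of_pos (show 0 < 1 + exp (-x) by positivity)]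

lemma integral_log_one_add_exp_neg : ∫ x in Ioi (0 : ℝ), log (1 + exp (-x)) = π ^ 2 / 12 := by
  rw [setIntegral_congr_fun measurableSet_Ioi fun _ hx => log_one_add_exp_neg (ne_of_gt hx),
    integral_sub (integrableOn_log_one_sub_exp_neg_mul two_pos) integrableOn_log_one_sub_exp_neg,
    integral_log_one_sub_exp_neg_mul two_pos, integral_log_one_sub_exp_neg]
  ring

lemma integral_neg_zero_sub_integral_zero_log_one_add_exp_neg (a : ℝ) :
    (∫ x in -a..0, log (1 + exp (-x))) - ∫ x in 0..a, log (1 + exp (-x)) = a ^ 2 / 2 := by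
  have hrefl := intervalIntegral.integral_comp_neg (a := 0) (b := a) fun x => log (1 + exp (-x))
  have hcont : Continuous fun x => log (1 + exp (- -x)) :=
    continuous_log_one_add_exp_neg.comp continuous_neg
  rw [neg_zero] at hrefl
  rw [← hrefl, ← intervalIntegral.integral_sub (hcont.intervalIntegrable _ _)
    (continuous_log_one_add_exp_neg.intervalIntegrable _ _)]
  simp only [neg_neg, log_one_add_exp_sub_log_one_add_exp_neg, integral_id]
  ring

lemma integral_Ioi_add_integral_Ioi_neg_log_one_add_exp_neg (a : ℝ) :
    (∫ x in Ioi a, log (1 + exp (-x))) + ∫ x in Ioi (-a), log (1 + exp (-x)) =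
      π ^ 2 / 6 + a ^ 2 / 2 := by
  have hsplit (b c : ℝ) := intervalIntegral.integral_interval_add_Ioi
    (integrableOn_log_one_add_exp_neg b) (integrableOn_log_one_add_exp_neg c)
  linarith [hsplit 0 a, hsplit (-a) 0, integral_log_one_add_exp_neg,
    integral_neg_zero_sub_integral_zero_log_one_add_exp_neg a]

end LogOneAddExp

section CoshQuotient

lemma cosh_add_cosh_eq_exp_mul (x a : ℝ) :
    cosh x + cosh a = exp x / 2 * ((1 + exp (-(x + a))) * (1 + exp (-(x + -a)))) := by
  simp only [cosh_eq, neg_add, neg_neg, exp_add, exp_neg]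
  field_simp
  ring

lemma cosh_sub_one_eq_exp_mul (x : ℝ) : cosh x - 1 = exp x / 2 * (1 - exp (-x)) ^ 2 := by
  simp only [cosh_eq, exp_neg]
  field_simp
  ring

lemma log_cosh_add_cosh_div_cosh_sub_one {x : ℝ} (hx : x ≠ 0) (a : ℝ) :
    log ((cosh x + cosh a) / (cosh x - 1)) =
      log (1 + exp (-(x + a))) + log (1 + exp (-(x + -a))) - 2 * log (1 - exp (-x)) := by
  rw [cosh_add_cosh_eq_exp_mul, cosh_sub_one_eq_exp_mul, mul_div_mul_left _ _ (by positivity),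
    log_div (by positivity) (pow_ne_zero 2 (one_sub_exp_neg_ne_zero hx)),
    log_mul (by positivity) (by positivity), log_pow, Nat.cast_ofNat]

lemma integral_Ioi_log_cosh_add_cosh_div_cosh_sub_one (a : ℝ) :
    ∫ x in Ioi (0 : ℝ), log ((cosh x + cosh a) / (cosh x - 1)) = (π ^ 2 + a ^ 2) / 2 := by
  have hshift_integrable (c : ℝ) : IntegrableOn (fun x => log (1 + exp (-(x + c)))) (Ioi 0) :=
    (integrableOn_Ioi_comp_add_right_iff (fun x => log (1 + exp (-x))) 0 c).2
      (integrableOn_log_one_add_exp_neg _)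
  have hshift (c : ℝ) :
      ∫ x in Ioi (0 : ℝ), log (1 + exp (-(x + c))) = ∫ x in Ioi c, log (1 + exp (-x)) := by
    rw [integral_Ioi_comp_add_right (fun x => log (1 + exp (-x))), zero_add]
  rw [setIntegral_congr_fun measurableSet_Ioi
      fun _ hx => log_cosh_add_cosh_div_cosh_sub_one (ne_of_gt hx) a,
    integral_sub ((hshift_integrable a).fun_add (hshift_integrable (-a)))
      (integrableOn_log_one_sub_exp_neg.const_mul 2),
    integral_add (hshift_integrable a) (hshift_integrable (-a)), hshift, hshift,
    integral_Ioi_add_integral_Ioi_neg_log_one_add_exp_neg, integral_const_mul,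
    integral_log_one_sub_exp_neg]
  ring

lemma integral_log_cosh_add_cosh_div_cosh_sub_one (a : ℝ) :
    ∫ x, log ((cosh x + cosh a) / (cosh x - 1)) = π ^ 2 + a ^ 2 := by
  have heven := integral_comp_abs (f := fun x => log ((cosh x + cosh a) / (cosh x - 1)))
  simp only [cosh_abs] at heven
  rw [heven, integral_Ioi_log_cosh_add_cosh_div_cosh_sub_one]
  ring

end CoshQuotient

/-- **Total mass of the distance-difference density `X₁(x;L)`.** For `L ≥ 0`,
`∫_{−∞}^∞ 2 log((cosh x + cosh(L/2))/(cosh x − 1)) dx = 2π² + L²/2`,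
which is the Weil–Petersson volume `V_{0,4}(0,0,0,L)`. -/
theorem stmt_10 (L : ℝ) (hL : 0 ≤ L) :
    ∫ x : ℝ, 2 * Real.log ((Real.cosh x + Real.cosh (L/2)) / (Real.cosh x - 1))
      = 2*π^2 + L^2/2 := by
  rw [integral_const_mul, integral_log_cosh_add_cosh_div_cosh_sub_one]
  ring
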